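/- Applicative bisimilarity ≈ on λ_S is a congruence: if t0 ≈° t1 (open extension), then C[t0] ≈° C[t1] for every context C. -/

import Mathlib

namespace LamS

/-- Terms of the λ-calculus with shift and reset, in de Bruijn representation.
    `lam` and `shift` bind variable 0. -/
inductive Tm : Type
  | var : ℕ → Tm
  | lam : Tm → Tm
  | app : Tm → Tm → Tm
  | shift : Tm → Tm
  | reset : Tm → Tm
  deriving DecidableEq

open Tm

/-- Lift (shift up) free de Bruijn indices `≥ c` by `d`. -/
def liftT (d : ℕ) : ℕ → Tm → Tm
  | c, var n => if n < c then var n else var (n + d)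
  | c, lam t => lam (liftT d (c+1) t)
  | c, app a b => app (liftT d c a) (liftT d c b)
  | c, shift t => shift (liftT d (c+1) t)
  | c, reset t => reset (liftT d c t)

/-- Capture-avoiding substitution `t[j := s]` (de Bruijn). -/
def substT : ℕ → Tm → Tm → Tm
  | j, s, var n => if n = j then liftT j 0 s else if j < n then var (n-1) else var n
  | j, s, lam t => lam (substT (j+1) s t)
  | j, s, app a b => app (substT j s a) (substT j s b)
  | j, s, shift t => shift (substT (j+1) s t)
  | j, s, reset t => reset (substT j s t)

/-- Values are λ-abstractions. -/
def IsValue (t : Tm) : Prop := ∃ b, t = lam b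

/-- All free variables are `< n`. -/
def ClosedUnder : ℕ → Tm → Prop
  | n, var m => m < n
  | n, lam t => ClosedUnder (n+1) t
  | n, app a b => ClosedUnder n a ∧ ClosedUnder n b
  | n, shift t => ClosedUnder (n+1) t
  | n, reset t => ClosedUnder n t

def Closed (t : Tm) : Prop := ClosedUnder 0 t

/-- Pure evaluation contexts, interpreted inside-out:
    `appV b E` is `E[(λ.b) []]` and `appL E t` is `E[[] t]`. -/
inductive PCtx : Type
  | hole : PCtx
  | appV : Tm → PCtx → PCtx
  | appL : PCtx → Tm → PCtx
  deriving DecidableEq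

def PCtx.plug : PCtx → Tm → Tm
  | .hole, t => t
  | .appV b E, t => E.plug (app (lam b) t)
  | .appL E s, t => E.plug (app t s)

def PCtx.liftC (d : ℕ) : ℕ → PCtx → PCtx
  | _, .hole => .hole
  | c, .appV b E => .appV (liftT d (c+1) b) (PCtx.liftC d c E)
  | c, .appL E s => .appL (PCtx.liftC d c E) (liftT d c s)

/-- Composition of pure contexts: `(E.comp E').plug t = E.plug (E'.plug t)`. -/
def PCtx.comp : PCtx → PCtx → PCtx
  | E, .hole => E
  | E, .appV b E' => .appV b (E.comp E')
  | E, .appL E' s => .appL (E.comp E') s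

/-- The captured delimited continuation `λx.⟨E[x]⟩`. -/
def contOf (E : PCtx) : Tm := lam (reset ((PCtx.liftC 1 0 E).plug (var 0)))

/-- Call-by-value evaluation contexts, interpreted inside-out. -/
inductive ECtx : Type
  | hole : ECtx
  | appV : Tm → ECtx → ECtx
  | appL : ECtx → Tm → ECtx
  | resetC : ECtx → ECtx
  deriving DecidableEq

def ECtx.plug : ECtx → Tm → Tm
  | .hole, t => t
  | .appV b F, t => F.plug (app (lam b) t)
  | .appL F s, t => F.plug (app t s)
  | .resetC F, t => F.plug (reset t)

def ClosedECtx : ECtx → Prop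
  | .hole => True
  | .appV b F => ClosedUnder 1 b ∧ ClosedECtx F
  | .appL F s => ClosedECtx F ∧ Closed s
  | .resetC F => ClosedECtx F

/-- One-step reduction of λ_S. -/
inductive Red : Tm → Tm → Prop
  | beta (F : ECtx) (t v : Tm) (hv : IsValue v) :
      Red (F.plug (app (lam t) v)) (F.plug (substT 0 v t))
  | cap (F : ECtx) (E : PCtx) (t : Tm) :
      Red (F.plug (reset (E.plug (shift t)))) (F.plug (reset (substT 0 (contOf E) t)))
  | res (F : ECtx) (v : Tm) (hv : IsValue v) :
      Red (F.plug (reset v)) (F.plug v)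

def RedStar : Tm → Tm → Prop := Relation.ReflTransGen Red

/-- A term is stuck if it is not a value and cannot reduce. -/
def Stuck (t : Tm) : Prop := ¬ IsValue t ∧ ∀ u, ¬ Red t u

/-- Evaluation: reduce to an irreducible term. -/
def Eval (t t' : Tm) : Prop := RedStar t t' ∧ ∀ u, ¬ Red t' u

def IsRedex (r : Tm) : Prop :=
  (∃ t v, IsValue v ∧ r = app (lam t) v) ∨
  (∃ E s, r = reset (PCtx.plug E (shift s))) ∨
  (∃ v, IsValue v ∧ r = reset v)

/-- Labels of the LTS. -/
inductive Label : Type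
  | tau : Label
  | val : Tm → Label
  | ctx : PCtx → Label

/-- The labelled transition system for λ_S. -/
inductive Step : Tm → Label → Tm → Prop
  | beta {t v : Tm} (hv : IsValue v) :
      Step (app (lam t) v) .tau (substT 0 v t)
  | resetVal {v : Tm} (hv : IsValue v) :
      Step (reset v) .tau v
  | appL {t0 t0' t1 : Tm} :
      Step t0 .tau t0' → Step (app t0 t1) .tau (app t0' t1)
  | appR {v t t' : Tm} (hv : IsValue v) :
      Step t .tau t' → Step (app v t) .tau (app v t')
  | resetT {t t' : Tm} :
      Step t .tau t' → Step (reset t) .tau (reset t')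
  | resetCap {t t' : Tm} :
      Step t (.ctx .hole) t' → Step (reset t) .tau t'
  | lamApp {t v : Tm} (hv : IsValue v) :
      Step (lam t) (.val v) (substT 0 v t)
  | shiftCap {t : Tm} (E : PCtx) :
      Step (shift t) (.ctx E) (reset (substT 0 (contOf E) t))
  | capL {t0 t0' t1 : Tm} {E : PCtx} :
      Step t0 (.ctx (.appL E t1)) t0' → Step (app t0 t1) (.ctx E) t0'
  | capR {b t t' : Tm} {E : PCtx} :
      Step t (.ctx (.appV b E)) t' → Step (app (lam b) t) (.ctx E) t'

def TauStar : Tm → Tm → Prop := Relation.ReflTransGen (fun a b => Step a .tau b)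

/-- Weak delay transition: τ-steps, then an `l`-step if `l ≠ τ`. -/
def Weak (t : Tm) (l : Label) (t' : Tm) : Prop :=
  match l with
  | .tau => TauStar t t'
  | _ => ∃ u, TauStar t u ∧ Step u l t'

/-- Applicative simulation. -/
def IsSim (R : Tm → Tm → Prop) : Prop :=
  ∀ ⦃t0 t1⦄, R t0 t1 → ∀ ⦃l t0'⦄, Step t0 l t0' →
    ∃ t1', Weak t1 l t1' ∧ R t0' t1'

def IsBisim (R : Tm → Tm → Prop) : Prop := IsSim R ∧ IsSim (flip R)

/-- Applicative bisimilarity: the largest applicative bisimulation. -/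
def Bisim (t0 t1 : Tm) : Prop := ∃ R, IsBisim R ∧ R t0 t1

/-- Big-step applicative simulation. -/
def IsBigSim (R : Tm → Tm → Prop) : Prop :=
  ∀ ⦃t0 t1⦄, R t0 t1 → ∀ ⦃l t0'⦄, l ≠ Label.tau → Weak t0 l t0' →
    ∃ t1', Weak t1 l t1' ∧ R t0' t1'

def IsBigBisim (R : Tm → Tm → Prop) : Prop := IsBigSim R ∧ IsBigSim (flip R)

/-- Big-step applicative bisimilarity. -/
def BigBisim (t0 t1 : Tm) : Prop := ∃ R, IsBigBisim R ∧ R t0 t1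

/-- General contexts. -/
inductive Ctx : Type
  | hole : Ctx
  | lam : Ctx → Ctx
  | appL : Ctx → Tm → Ctx
  | appR : Tm → Ctx → Ctx
  | shift : Ctx → Ctx
  | reset : Ctx → Ctx

/-- Plugging a term in a general context (free variables may be captured). -/
def Ctx.plug : Ctx → Tm → Tm
  | .hole, t => t
  | .lam C, t => Tm.lam (C.plug t)
  | .appL C s, t => Tm.app (C.plug t) s
  | .appR s C, t => Tm.app s (C.plug t)
  | .shift C, t => Tm.shift (C.plug t)
  | .reset C, t => Tm.reset (C.plug t)

def CtxClosedUnder : ℕ → Ctx → Prop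
  | _, .hole => True
  | n, .lam C => CtxClosedUnder (n+1) C
  | n, .appL C s => CtxClosedUnder n C ∧ ClosedUnder n s
  | n, .appR s C => ClosedUnder n s ∧ CtxClosedUnder n C
  | n, .shift C => CtxClosedUnder (n+1) C
  | n, .reset C => CtxClosedUnder n C

def ClosedCtx (C : Ctx) : Prop := CtxClosedUnder 0 C

def EvalsToValue (t : Tm) : Prop := ∃ v, IsValue v ∧ Eval t v

def EvalsToStuck (t : Tm) : Prop := ∃ s, Stuck s ∧ Eval t s

/-- Contextual equivalence on closed terms. -/
def CtxEquiv (t0 t1 : Tm) : Prop :=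
  ∀ C : Ctx, ClosedCtx C →
    (EvalsToValue (C.plug t0) ↔ EvalsToValue (C.plug t1)) ∧
    (EvalsToStuck (C.plug t0) ↔ EvalsToStuck (C.plug t1))

/-- Contextual equivalence restricted to evaluation contexts. -/
def ECtxEquiv (t0 t1 : Tm) : Prop :=
  ∀ F : ECtx, ClosedECtx F →
    (EvalsToValue (F.plug t0) ↔ EvalsToValue (F.plug t1)) ∧
    (EvalsToStuck (F.plug t0) ↔ EvalsToStuck (F.plug t1))

/-- Lifting a substitution under a binder. -/
def liftSub (σ : ℕ → Tm) : ℕ → Tm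
  | 0 => var 0
  | n+1 => liftT 1 0 (σ n)

/-- Apply a substitution to all free variables of a term. -/
def applySub (σ : ℕ → Tm) : Tm → Tm
  | var n => σ n
  | lam t => lam (applySub (liftSub σ) t)
  | app a b => app (applySub σ a) (applySub σ b)
  | shift t => shift (applySub (liftSub σ) t)
  | reset t => reset (applySub σ t)

/-- A closing substitution maps every variable to a closed value. -/
def ClosingSub (σ : ℕ → Tm) : Prop := ∀ n, IsValue (σ n) ∧ Closed (σ n)

/-- Open extension of a relation on closed terms. -/
def OpenExt (R : Tm → Tm → Prop) (t0 t1 : Tm) : Prop :=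
  ∀ σ, ClosingSub σ → R (applySub σ t0) (applySub σ t1)

/-- Howe's closure of applicative bisimilarity (compatible refinement rules inlined). -/
inductive Howe : Tm → Tm → Prop
  | base {t0 t1} : OpenExt Bisim t0 t1 → Howe t0 t1
  | right {t0 t2 t1} : Howe t0 t2 → OpenExt Bisim t2 t1 → Howe t0 t1
  | compVar (n : ℕ) : Howe (var n) (var n)
  | compLam {t0 t1} : Howe t0 t1 → Howe (lam t0) (lam t1)
  | compApp {a0 a1 b0 b1} : Howe a0 a1 → Howe b0 b1 → Howe (app a0 b0) (app a1 b1)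
  | compShift {t0 t1} : Howe t0 t1 → Howe (shift t0) (shift t1)
  | compReset {t0 t1} : Howe t0 t1 → Howe (reset t0) (reset t1)

/-- Howe's closure restricted to closed terms. -/
def HoweC (t0 t1 : Tm) : Prop := Closed t0 ∧ Closed t1 ∧ Howe t0 t1

/-- Extension of Howe's closure to pure contexts. -/
inductive PCtxHowe : PCtx → PCtx → Prop
  | hole : PCtxHowe .hole .hole
  | appV {b0 b1 E0 E1} : Howe b0 b1 → PCtxHowe E0 E1 → PCtxHowe (.appV b0 E0) (.appV b1 E1)
  | appL {E0 E1 t0 t1} : PCtxHowe E0 E1 → Howe t0 t1 → PCtxHowe (.appL E0 t0) (.appL E1 t1)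

/-- Extension of Howe's closure to labels. -/
def LabHowe : Label → Label → Prop
  | .tau, .tau => True
  | .val v0, .val v1 => Closed v0 ∧ Closed v1 ∧ Howe v0 v1
  | .ctx E0, .ctx E1 => PCtxHowe E0 E1
  | _, _ => False

/-- ω = λx. x x -/
def omegaTm : Tm := lam (app (var 0) (var 0))

/-- Ω = ω ω, the standard diverging term. -/
def OmegaTm : Tm := app omegaTm omegaTm

/-- Every τ-reachable term can do a τ-step: only infinite τ-sequences. -/
def Diverges (t : Tm) : Prop := ∀ u, TauStar t u → ∃ u', Step u .tau u'

/-- No weak non-τ transition. -/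
def NoObs (t : Tm) : Prop := ∀ l t', l ≠ Label.tau → ¬ Weak t l t'

end LamS

/-!
The proof is Howe's method. The LTS quantifies over all values and pure contexts, not only the
closed ones, so terms live in a scope `n`: the variables below `n` are parameters ranging over
values, the others are constants. The Howe closure of bisimilarity in scope `n` is compatible and
substitutive by construction; in scope `0` it is a simulation, by induction on the term that takes
the step, and its transitive closure is symmetric, so it is contained in bisimilarity.

Bisimilarity under *closed* value substitutions is carried over to all value substitutions by noting
that a free variable has no transition and is therefore bisimilar to the diverging term `Ω`: closing
a term with `Ω` does not change its bisimilarity class.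
-/

namespace LamS
open Tm Relation Function

/-! ### Substitution -/

/-- Lifting a renaming under a binder. Renamings act on terms as the substitutions `var ∘ f`. -/
def liftRen (f : ℕ → ℕ) : ℕ → ℕ
  | 0 => 0
  | n + 1 => f n + 1

/-- The substitution `[0 := v]`, which also lowers the other variables by one. -/
def singleSub (v : Tm) : ℕ → Tm
  | 0 => v
  | n + 1 => var n

theorem liftSub_var_comp (f : ℕ → ℕ) : liftSub (var ∘ f) = var ∘ liftRen f := by
  funext n
  cases n <;> simp [liftSub, liftT, liftRen]

theorem liftSub_var : liftSub var = var := by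
  funext n
  cases n <;> simp [liftSub, liftT]

theorem applySub_var (t : Tm) : applySub var t = t := by
  induction t <;> simp_all only [applySub, liftSub_var]

theorem iterate_liftRen_add (d c n : ℕ) :
    liftRen^[c] (· + d) n = if n < c then n else n + d := by
  induction c generalizing n with
  | zero => simp
  | succ c ih =>
    rw [iterate_succ_apply']
    cases n with
    | zero => simp [liftRen]
    | succ n => simp only [liftRen, ih]; split_ifs <;> omega

theorem liftT_eq_applySub (d c : ℕ) (t : Tm) :
    liftT d c t = applySub (var ∘ liftRen^[c] (· + d)) t := by
  induction t generalizing c with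
  | var n => exact (iterate_liftRen_add d c n ▸ apply_ite var _ _ _).symm
  | lam t ih | shift t ih =>
    simp only [liftT, applySub, liftSub_var_comp, ih, iterate_succ_apply']
  | app t s iht ihs => simp only [liftT, applySub, iht, ihs]
  | reset t ih => simp only [liftT, applySub, ih]

theorem liftT_zero_eq_applySub (d : ℕ) (t : Tm) : liftT d 0 t = applySub (var ∘ (· + d)) t :=
  liftT_eq_applySub d 0 t

theorem liftSub_comp_liftRen (σ : ℕ → Tm) (f : ℕ → ℕ) :
    liftSub σ ∘ liftRen f = liftSub (σ ∘ f) := by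
  funext n
  cases n <;> rfl

theorem applySub_rename (σ : ℕ → Tm) (f : ℕ → ℕ) (t : Tm) :
    applySub σ (applySub (var ∘ f) t) = applySub (σ ∘ f) t := by
  induction t generalizing σ f with
  | var n => rfl
  | lam t ih | shift t ih => simp only [applySub, liftSub_var_comp, ih, liftSub_comp_liftRen]
  | app t s iht ihs => simp only [applySub, iht, ihs]
  | reset t ih => simp only [applySub, ih]

theorem liftRen_rename_comp_liftSub (f : ℕ → ℕ) (σ : ℕ → Tm) :
    applySub (var ∘ liftRen f) ∘ liftSub σ = liftSub (applySub (var ∘ f) ∘ σ) := by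
  funext n
  cases n with
  | zero => rfl
  | succ n =>
    simp only [comp_apply, liftSub, liftT_zero_eq_applySub, applySub_rename]
    rfl

theorem rename_applySub (f : ℕ → ℕ) (σ : ℕ → Tm) (t : Tm) :
    applySub (var ∘ f) (applySub σ t) = applySub (applySub (var ∘ f) ∘ σ) t := by
  induction t generalizing σ f with
  | var n => rfl
  | lam t ih | shift t ih =>
    simp only [applySub, liftSub_var_comp, ih, liftRen_rename_comp_liftSub]
  | app t s iht ihs => simp only [applySub, iht, ihs]
  | reset t ih => simp only [applySub, ih]

theorem applySub_liftSub_comp_liftSub (τ σ : ℕ → Tm) :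
    applySub (liftSub τ) ∘ liftSub σ = liftSub (applySub τ ∘ σ) := by
  funext n
  cases n with
  | zero => rfl
  | succ n =>
    simp only [comp_apply, liftSub, liftT_zero_eq_applySub, applySub_rename, rename_applySub]
    congr 1
    funext i
    exact liftT_zero_eq_applySub 1 (τ i)

theorem applySub_applySub (τ σ : ℕ → Tm) (t : Tm) :
    applySub τ (applySub σ t) = applySub (applySub τ ∘ σ) t := by
  induction t generalizing σ τ with
  | var n => rfl
  | lam t ih | shift t ih => simp only [applySub, ih, applySub_liftSub_comp_liftSub]
  | app t s iht ihs => simp only [applySub, iht, ihs]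
  | reset t ih => simp only [applySub, ih]

theorem liftT_zero_left (t : Tm) : liftT 0 0 t = t := by
  rw [liftT_zero_eq_applySub]
  exact applySub_var t

theorem liftT_one_liftT (d : ℕ) (t : Tm) : liftT 1 0 (liftT d 0 t) = liftT (d + 1) 0 t := by
  simp only [liftT_zero_eq_applySub, applySub_rename]
  rfl

theorem iterate_liftSub_singleSub (j : ℕ) (s : Tm) (n : ℕ) :
    liftSub^[j] (singleSub s) n =
      if n = j then liftT j 0 s else if j < n then var (n - 1) else var n := by
  induction j generalizing n with
  | zero => cases n <;> simp [singleSub, liftT_zero_left]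
  | succ j ih =>
    rw [iterate_succ_apply']
    cases n with
    | zero => simp [liftSub]
    | succ n =>
      simp only [liftSub, ih, Nat.add_right_cancel_iff, Nat.add_lt_add_iff_right]
      split_ifs with h_eq h_lt
      · exact liftT_one_liftT j s
      · simp only [liftT, Nat.not_lt_zero, if_false]
        congr 1
        omega
      · simp [liftT]

theorem substT_eq_applySub (j : ℕ) (s t : Tm) :
    substT j s t = applySub (liftSub^[j] (singleSub s)) t := by
  induction t generalizing j with
  | var n => simp only [substT, applySub, iterate_liftSub_singleSub]
  | lam t ih | shift t ih => simp only [substT, applySub, ih, iterate_succ_apply']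
  | app t s iht ihs => simp only [substT, applySub, iht, ihs]
  | reset t ih => simp only [substT, applySub, ih]

theorem substT_zero_eq_applySub (s t : Tm) : substT 0 s t = applySub (singleSub s) t :=
  substT_eq_applySub 0 s t

theorem ClosedUnder.liftT_one {n : ℕ} {t : Tm} (h : ClosedUnder n t) (c : ℕ) :
    ClosedUnder (n + 1) (liftT 1 c t) := by
  induction t generalizing n c with
  | var i =>
    simp only [liftT]
    split_ifs <;> simp only [ClosedUnder] at h ⊢ <;> omega
  | lam _ ih | shift _ ih => exact ih (n := n + 1) h (c + 1)
  | app _ _ iht ihs => exact ⟨iht h.1 c, ihs h.2 c⟩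
  | reset _ ih => exact ih (n := n) h c

theorem closedUnder_liftSub {n : ℕ} {σ : ℕ → Tm} (hσ : ∀ i, ClosedUnder n (σ i)) :
    ∀ i, ClosedUnder (n + 1) (liftSub σ i)
  | 0 => n.succ_pos
  | i + 1 => (hσ i).liftT_one 0

theorem closedUnder_applySub {n : ℕ} {σ : ℕ → Tm} (hσ : ∀ i, ClosedUnder n (σ i)) (t : Tm) :
    ClosedUnder n (applySub σ t) := by
  induction t generalizing n σ with
  | var i => exact hσ i
  | lam _ ih | shift _ ih => exact ih (closedUnder_liftSub hσ)
  | app _ _ iht ihs => exact ⟨iht hσ, ihs hσ⟩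
  | reset _ ih => exact ih hσ

theorem IsValue.applySub {t : Tm} (h : IsValue t) (σ : ℕ → Tm) : IsValue (applySub σ t) := by
  obtain ⟨b, rfl⟩ := h
  exact ⟨_, rfl⟩

/-! ### Weak transitions -/

theorem TauStar.app_left {t t' : Tm} (h : TauStar t t') (s : Tm) :
    TauStar (app t s) (app t' s) :=
  ReflTransGen.lift (app · s) (fun _ _ => Step.appL) _ _ h

theorem TauStar.app_right {v s s' : Tm} (hv : IsValue v) (h : TauStar s s') :
    TauStar (app v s) (app v s') :=
  ReflTransGen.lift (app v ·) (fun _ _ => Step.appR hv) _ _ h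

theorem TauStar.reset {t t' : Tm} (h : TauStar t t') : TauStar (Tm.reset t) (Tm.reset t') :=
  ReflTransGen.lift Tm.reset (fun _ _ => Step.resetT) _ _ h

theorem tauStar_lam_iff {b u : Tm} : TauStar (lam b) u ↔ u = lam b :=
  reflTransGen_iff_eq fun _ => nofun

theorem Weak.of_step {t t' : Tm} {l : Label} (h : Step t l t') : Weak t l t' := by
  cases l with
  | tau => exact ReflTransGen.single h
  | val _ | ctx _ => exact ⟨t, .refl, h⟩

theorem Weak.head {t u t' : Tm} {l : Label} (h : TauStar t u) (h' : Weak u l t') :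
    Weak t l t' := by
  cases l with
  | tau => exact ReflTransGen.trans h h'
  | val _ | ctx _ =>
    obtain ⟨w, huw, hw⟩ := h'
    exact ⟨w, ReflTransGen.trans h huw, hw⟩

theorem Weak.tauStar_or_step {t t' : Tm} {l : Label} (h : Weak t l t') :
    (l = .tau ∧ TauStar t t') ∨ ∃ u, TauStar t u ∧ Step u l t' := by
  cases l with
  | tau => exact .inl ⟨rfl, h⟩
  | val _ | ctx _ => exact .inr h

/-! ### Simulations and bisimilarity -/

section Simulation

variable {R S : Tm → Tm → Prop}

theorem IsSim.tauStar (hR : IsSim R) {t s t' : Tm} (h : R t s) (ht : TauStar t t') :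
    ∃ s', TauStar s s' ∧ R t' s' := by
  induction ht with
  | refl => exact ⟨s, .refl, h⟩
  | tail _ hstep ih =>
    obtain ⟨u, hsu, hu⟩ := ih
    obtain ⟨s', hus', hs'⟩ := hR hu hstep
    exact ⟨s', ReflTransGen.trans hsu hus', hs'⟩

theorem IsSim.weak (hR : IsSim R) {t s t' : Tm} {l : Label} (h : R t s) (ht : Weak t l t') :
    ∃ s', Weak s l s' ∧ R t' s' := by
  obtain ⟨rfl, h_tau⟩ | ⟨u, htu, hu⟩ := ht.tauStar_or_step
  · exact hR.tauStar h h_tau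
  · obtain ⟨w, hsw, hw⟩ := hR.tauStar h htu
    obtain ⟨s', hws', hs'⟩ := hR hw hu
    exact ⟨s', hws'.head hsw, hs'⟩

theorem isSim_eq : IsSim Eq := by
  rintro t _ rfl l t' h
  exact ⟨t', .of_step h, rfl⟩

theorem IsSim.comp (hR : IsSim R) (hS : IsSim S) : IsSim (Relation.Comp R S) := by
  rintro t s ⟨u, htu, hus⟩ l t' ht
  obtain ⟨u', hu, htu'⟩ := hR htu ht
  obtain ⟨s', hs, hus'⟩ := hS.weak hus hu
  exact ⟨s', hs, u', htu', hus'⟩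

theorem IsSim.transGen (hR : IsSim R) : IsSim (TransGen R) := by
  intro t s h l t' ht
  induction h with
  | single h =>
    obtain ⟨s', hs, h'⟩ := hR h ht
    exact ⟨s', hs, .single h'⟩
  | tail _ h ih =>
    obtain ⟨u', hu, htu'⟩ := ih
    obtain ⟨s', hs, hus'⟩ := hR.weak h hu
    exact ⟨s', hs, htu'.tail hus'⟩

theorem IsSim.isBisim [Std.Symm R] (hR : IsSim R) : IsBisim R :=
  ⟨hR, by rwa [Std.Symm.flip_eq]⟩

end Simulation

theorem isSim_bisim : IsSim Bisim := by
  rintro t s ⟨R, hR, h⟩ l t' ht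
  obtain ⟨s', hs, h'⟩ := hR.1 h ht
  exact ⟨s', hs, R, hR, h'⟩

@[refl]
theorem Bisim.refl (t : Tm) : Bisim t t :=
  ⟨Eq, isSim_eq.isBisim, rfl⟩

@[symm]
theorem Bisim.symm {t s : Tm} : Bisim t s → Bisim s t
  | ⟨R, ⟨hR, hR'⟩, h⟩ => ⟨flip R, ⟨hR', hR⟩, h⟩

@[trans]
theorem Bisim.trans {t u s : Tm} : Bisim t u → Bisim u s → Bisim t s := by
  rintro ⟨R, hR, htu⟩ ⟨S, hS, hus⟩
  refine ⟨Relation.Comp R S, ⟨hR.1.comp hS.1, ?_⟩, u, htu, hus⟩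
  rw [flip_comp]
  exact hS.2.comp hR.2

theorem Bisim.exists_tauStar_lam {b s : Tm} (h : Bisim (lam b) s) :
    ∃ a, TauStar s (lam a) ∧ Bisim (lam b) (lam a) := by
  have h_id : IsValue (lam (var 0)) := ⟨_, rfl⟩
  obtain ⟨_, ⟨u, hsu, hu⟩, -⟩ := isSim_bisim h (Step.lamApp (t := b) h_id)
  cases hu with
  | @lamApp a =>
    obtain ⟨w, hw, haw⟩ := isSim_bisim.tauStar h.symm hsu
    obtain rfl := tauStar_lam_iff.1 hw
    exact ⟨a, hsu, haw.symm⟩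

theorem Bisim.substT_of_lam {b a v : Tm} (h : Bisim (lam b) (lam a)) (hv : IsValue v) :
    Bisim (substT 0 v b) (substT 0 v a) := by
  obtain ⟨_, ⟨u, hu, hstep⟩, h'⟩ := isSim_bisim h (Step.lamApp (t := b) hv)
  obtain rfl := tauStar_lam_iff.1 hu
  cases hstep
  exact h'

/-! ### Bisimilarity in a scope -/

/-- Values in scope `n`: call-by-value variables count as values. -/
def OpenValue (n : ℕ) (t : Tm) : Prop := IsValue t ∨ ∃ i < n, t = var i

/-- Value substitutions from scope `m` to scope `n`: the parameters become values in scope `n`, the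
`i`-th constant `var (m + i)` becomes the `i`-th constant `var (n + i)`. -/
structure ValueSub (m n : ℕ) (σ : ℕ → Tm) : Prop where
  openValue : ∀ i < m, OpenValue n (σ i)
  constant : ∀ i, σ (m + i) = var (n + i)

/-- The open extension of bisimilarity in scope `n`: only the variables below `n` are instantiated,
the others stay free. Unlike `OpenExt Bisim`, it does not ask for closed instances. -/
def OpenBisim (n : ℕ) (t s : Tm) : Prop :=
  ∀ ρ, ValueSub n 0 ρ → Bisim (applySub ρ t) (applySub ρ s)

variable {m n k : ℕ} {σ τ : ℕ → Tm}

theorem openValue_zero_iff {t : Tm} : OpenValue 0 t ↔ IsValue t := by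
  simp [OpenValue]

theorem OpenValue.liftT_one {t : Tm} (h : OpenValue n t) : OpenValue (n + 1) (liftT 1 0 t) := by
  rcases h with ⟨b, rfl⟩ | ⟨i, hi, rfl⟩
  · exact .inl ⟨_, rfl⟩
  · exact .inr ⟨i + 1, by omega, by simp [liftT]⟩

theorem OpenValue.liftSub (hσ : ∀ i < m, OpenValue n (σ i)) :
    ∀ i < m + 1, OpenValue (n + 1) (liftSub σ i)
  | 0, _ => .inr ⟨0, n.succ_pos, rfl⟩
  | i + 1, hi => (hσ i (Nat.lt_of_succ_lt_succ hi)).liftT_one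

theorem OpenValue.applySub {t : Tm} (h : OpenValue m t) (hσ : ∀ i < m, OpenValue n (σ i)) :
    OpenValue n (applySub σ t) := by
  rcases h with h | ⟨i, hi, rfl⟩
  · exact .inl (h.applySub σ)
  · exact hσ i hi

theorem ValueSub.comp (hσ : ValueSub m n σ) (hτ : ValueSub n k τ) :
    ValueSub m k (applySub τ ∘ σ) where
  openValue i hi := (hσ.openValue i hi).applySub hτ.openValue
  constant i := by rw [comp_apply, hσ.constant, applySub, hτ.constant]

theorem ValueSub.liftSub (hσ : ValueSub m n σ) : ValueSub (m + 1) (n + 1) (liftSub σ) where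
  openValue := OpenValue.liftSub hσ.openValue
  constant i := by
    rw [Nat.add_right_comm, LamS.liftSub, hσ.constant]
    simp [liftT, Nat.add_right_comm]

theorem valueSub_zero_zero_iff : ValueSub 0 0 σ ↔ σ = var :=
  ⟨fun h => funext fun i => by simpa using h.constant i, by rintro rfl; exact ⟨nofun, fun _ => rfl⟩⟩

theorem valueSub_succ (n : ℕ) : ValueSub n (n + 1) (var ∘ (· + 1)) where
  openValue i hi := .inr ⟨i + 1, by omega, rfl⟩
  constant i := by simp [Nat.add_right_comm]

theorem valueSub_singleSub {v : Tm} (hv : IsValue v) : ValueSub 1 0 (singleSub v) where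
  openValue i hi := by
    obtain rfl := Nat.lt_one_iff.1 hi
    exact .inl hv
  constant i := by rw [Nat.add_comm, Nat.zero_add, singleSub]

theorem OpenBisim.refl (n : ℕ) (t : Tm) : OpenBisim n t t :=
  fun _ _ => .refl _

theorem OpenBisim.symm {t s : Tm} (h : OpenBisim n t s) : OpenBisim n s t :=
  fun ρ hρ => (h ρ hρ).symm

theorem OpenBisim.trans {t u s : Tm} (h : OpenBisim n t u) (h' : OpenBisim n u s) :
    OpenBisim n t s :=
  fun ρ hρ => (h ρ hρ).trans (h' ρ hρ)

theorem openBisim_zero_iff {t s : Tm} : OpenBisim 0 t s ↔ Bisim t s := by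
  simp [OpenBisim, valueSub_zero_zero_iff, applySub_var]

theorem OpenBisim.applySub {t s : Tm} (h : OpenBisim m t s) (hσ : ValueSub m n σ) :
    OpenBisim n (applySub σ t) (applySub σ s) := by
  intro ρ hρ
  simpa only [applySub_applySub] using h _ (hσ.comp hρ)

/-! ### The Howe closure -/

/-- The Howe closure of bisimilarity in scope `n`. The rules for reflexivity and composition with
bisimilarity on the right are built into the compatibility rules, so that there is exactly one rule
for each head constructor of the left-hand term. -/
inductive ScopedHowe : ℕ → Tm → Tm → Prop
  | var {n i s} : OpenBisim n (var i) s → ScopedHowe n (var i) s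
  | lam {n b b' s} : ScopedHowe (n + 1) b b' → OpenBisim n (lam b') s → ScopedHowe n (lam b) s
  | app {n a a' b b' s} : ScopedHowe n a a' → ScopedHowe n b b' → OpenBisim n (app a' b') s →
      ScopedHowe n (app a b) s
  | shift {n b b' s} : ScopedHowe (n + 1) b b' → OpenBisim n (shift b') s →
      ScopedHowe n (shift b) s
  | reset {n b b' s} : ScopedHowe n b b' → OpenBisim n (reset b') s → ScopedHowe n (reset b) s

namespace ScopedHowe

variable {t s u a a' b b' v w : Tm}

theorem refl (n : ℕ) (t : Tm) : ScopedHowe n t t := by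
  induction t generalizing n with
  | var i => exact .var (.refl _ _)
  | lam t ih => exact .lam (ih _) (.refl _ _)
  | app t s iht ihs => exact .app (iht _) (ihs _) (.refl _ _)
  | shift t ih => exact .shift (ih _) (.refl _ _)
  | reset t ih => exact .reset (ih _) (.refl _ _)

theorem trans_openBisim (h : ScopedHowe n t u) (h' : OpenBisim n u s) : ScopedHowe n t s := by
  cases h with
  | var h => exact .var (h.trans h')
  | lam hb h => exact .lam hb (h.trans h')
  | app ha hb h => exact .app ha hb (h.trans h')
  | shift hb h => exact .shift hb (h.trans h')
  | reset hb h => exact .reset hb (h.trans h')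

theorem of_openBisim (h : OpenBisim n t s) : ScopedHowe n t s :=
  (refl n t).trans_openBisim h

theorem of_bisim (h : Bisim t s) : ScopedHowe 0 t s :=
  of_openBisim (openBisim_zero_iff.2 h)

theorem lam_congr (h : ScopedHowe (n + 1) b b') : ScopedHowe n (Tm.lam b) (Tm.lam b') :=
  .lam h (.refl _ _)

theorem app_congr (ha : ScopedHowe n a a') (hb : ScopedHowe n b b') :
    ScopedHowe n (Tm.app a b) (Tm.app a' b') :=
  .app ha hb (.refl _ _)

theorem shift_congr (h : ScopedHowe (n + 1) b b') : ScopedHowe n (Tm.shift b) (Tm.shift b') :=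
  .shift h (.refl _ _)

theorem reset_congr (h : ScopedHowe n b b') : ScopedHowe n (Tm.reset b) (Tm.reset b') :=
  .reset h (.refl _ _)

theorem rename (h : ScopedHowe m t s) {f : ℕ → ℕ} (hf : ValueSub m n (Tm.var ∘ f)) :
    ScopedHowe n (applySub (Tm.var ∘ f) t) (applySub (Tm.var ∘ f) s) := by
  induction h generalizing n f with
  | var h => exact .var (h.applySub hf)
  | app _ _ h iha ihb => exact .app (iha hf) (ihb hf) (h.applySub hf)
  | reset _ h ih => exact .reset (ih hf) (h.applySub hf)
  | lam _ h ih =>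
    have hb := ih (liftSub_var_comp f ▸ hf.liftSub)
    rw [← liftSub_var_comp] at hb
    exact .lam hb (h.applySub hf)
  | shift _ h ih =>
    have hb := ih (liftSub_var_comp f ▸ hf.liftSub)
    rw [← liftSub_var_comp] at hb
    exact .shift hb (h.applySub hf)

theorem liftT_one (h : ScopedHowe n t s) : ScopedHowe (n + 1) (liftT 1 0 t) (liftT 1 0 s) := by
  simpa only [liftT_zero_eq_applySub] using h.rename (valueSub_succ n)

theorem liftSub (h : ∀ i, ScopedHowe n (σ i) (τ i)) :
    ∀ i, ScopedHowe (n + 1) (liftSub σ i) (liftSub τ i)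
  | 0 => refl _ _
  | i + 1 => (h i).liftT_one

theorem applySub (h : ScopedHowe m t s) (hστ : ∀ i, ScopedHowe n (σ i) (τ i))
    (hτ : ValueSub m n τ) : ScopedHowe n (applySub σ t) (applySub τ s) := by
  induction h generalizing n σ τ with
  | var h => exact (hστ _).trans_openBisim (h.applySub hτ)
  | lam _ h ih => exact .lam (ih (liftSub hστ) hτ.liftSub) (h.applySub hτ)
  | app _ _ h iha ihb => exact .app (iha hστ hτ) (ihb hστ hτ) (h.applySub hτ)
  | shift _ h ih => exact .shift (ih (liftSub hστ) hτ.liftSub) (h.applySub hτ)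
  | reset _ h ih => exact .reset (ih hστ hτ) (h.applySub hτ)

theorem substT_zero (h : ScopedHowe 1 t s) (hvw : ScopedHowe 0 v w) (hw : IsValue w) :
    ScopedHowe 0 (substT 0 v t) (substT 0 w s) := by
  simp only [substT_zero_eq_applySub]
  refine h.applySub (fun i => ?_) (valueSub_singleSub hw)
  cases i with
  | zero => exact hvw
  | succ i => exact refl _ _

theorem applySub_congr (hστ : ∀ i, ScopedHowe n (σ i) (τ i)) (t : Tm) :
    ScopedHowe n (LamS.applySub σ t) (LamS.applySub τ t) := by
  induction t generalizing n σ τ with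
  | var i => exact hστ i
  | lam t ih => exact (ih (liftSub hστ)).lam_congr
  | app t s iht ihs => exact (iht hστ).app_congr (ihs hστ)
  | shift t ih => exact (ih (liftSub hστ)).shift_congr
  | reset t ih => exact (ih hστ).reset_congr

/-! ### The Howe closure is a simulation -/

theorem exists_tauStar_lam (h : ScopedHowe 0 (Tm.lam b) s) :
    ∃ a, TauStar s (Tm.lam a) ∧ ScopedHowe 0 (Tm.lam b) (Tm.lam a) := by
  cases h with
  | lam hb h =>
    obtain ⟨a, hsa, ha⟩ := (openBisim_zero_iff.1 h).exists_tauStar_lam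
    exact ⟨a, hsa, .lam hb (openBisim_zero_iff.2 ha)⟩

theorem substT_of_lam (h : ScopedHowe 0 (Tm.lam b) (Tm.lam a)) (hvw : ScopedHowe 0 v w)
    (hw : IsValue w) : ScopedHowe 0 (substT 0 v b) (substT 0 w a) := by
  cases h with
  | lam hb h =>
    have hba := (openBisim_zero_iff.1 h).substT_of_lam hw
    exact (hb.substT_zero hvw hw).trans_openBisim (openBisim_zero_iff.2 hba)

end ScopedHowe

/-- The Howe closure on pure contexts, in scope `0`. -/
inductive PCtx.ScopedHowe : PCtx → PCtx → Prop
  | hole : ScopedHowe .hole .hole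
  | appV {b b' E E'} : LamS.ScopedHowe 0 (lam b) (lam b') → ScopedHowe E E' →
      ScopedHowe (.appV b E) (.appV b' E')
  | appL {E E' t t'} : ScopedHowe E E' → LamS.ScopedHowe 0 t t' →
      ScopedHowe (.appL E t) (.appL E' t')

theorem PCtx.ScopedHowe.refl (E : PCtx) : E.ScopedHowe E := by
  induction E with
  | hole => exact .hole
  | appV b E ih => exact .appV (.refl _ _) ih
  | appL E t ih => exact .appL ih (.refl _ _)

theorem PCtx.ScopedHowe.plug_liftC {E E' : PCtx} (hE : E.ScopedHowe E') {t t' : Tm}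
    (h : LamS.ScopedHowe 1 t t') :
    LamS.ScopedHowe 1 ((E.liftC 1 0).plug t) ((E'.liftC 1 0).plug t') := by
  induction hE generalizing t t' with
  | hole => exact h
  | appV hb _ ih => exact ih (hb.liftT_one.app_congr h)
  | appL _ ht ih => exact ih (h.app_congr ht.liftT_one)

theorem PCtx.ScopedHowe.contOf {E E' : PCtx} (hE : E.ScopedHowe E') :
    LamS.ScopedHowe 0 (contOf E) (contOf E') :=
  (hE.plug_liftC (.refl _ _)).reset_congr.lam_congr

/-- `s` answers an `l`-transition to `t'` up to the Howe closure. -/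
def HoweAnswers (s : Tm) (l : Label) (t' : Tm) : Prop :=
  ∃ s', Weak s l s' ∧ ScopedHowe 0 t' s'

theorem HoweAnswers.of_openBisim {s u t' : Tm} {l : Label} (h : HoweAnswers u l t')
    (hus : OpenBisim 0 u s) : HoweAnswers s l t' := by
  obtain ⟨u', hu, htu⟩ := h
  obtain ⟨s', hs, hus'⟩ := isSim_bisim.weak (openBisim_zero_iff.1 hus) hu
  exact ⟨s', hs, htu.trans_openBisim (openBisim_zero_iff.2 hus')⟩

namespace ScopedHowe

variable {t t' s v : Tm} {E E' : PCtx}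

/-- The induction extends the captured contexts by related, not equal, terms, so the two labels
differ. -/
theorem answers_ctx (h : ScopedHowe 0 t s) (hE : E.ScopedHowe E') (ht : Step t (.ctx E) t') :
    HoweAnswers s (.ctx E') t' := by
  induction t generalizing E E' s t' with
  | var | lam | reset => cases ht
  | shift b =>
    cases h with | shift hb hs =>
    refine HoweAnswers.of_openBisim ?_ hs
    cases ht with
    | shiftCap =>
      exact ⟨_, .of_step (.shiftCap E'), (hb.substT_zero hE.contOf ⟨_, rfl⟩).reset_congr⟩
  | app a b iha ihb =>
    cases h with | app ha hb hs =>
    refine HoweAnswers.of_openBisim ?_ hs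
    cases ht with
    | capL ht =>
      obtain ⟨u, ⟨a₁, ha₁, hu⟩, htu⟩ := iha ha (.appL hE hb) ht
      exact ⟨u, ⟨_, ha₁.app_left _, .capL hu⟩, htu⟩
    | capR ht =>
      obtain ⟨c, hc, hac⟩ := ha.exists_tauStar_lam
      obtain ⟨u, ⟨b₁, hb₁, hu⟩, htu⟩ := ihb hb (.appV hac hE) ht
      exact ⟨u, .head (hc.app_left _) ⟨_, hb₁.app_right ⟨_, rfl⟩, .capR hu⟩, htu⟩

theorem answers_val (h : ScopedHowe 0 t s) (ht : Step t (.val v) t') :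
    HoweAnswers s (.val v) t' := by
  cases ht with
  | lamApp hv =>
    obtain ⟨a, hsa, hba⟩ := h.exists_tauStar_lam
    exact ⟨_, ⟨_, hsa, .lamApp hv⟩, hba.substT_of_lam (refl _ _) hv⟩

theorem answers_beta (ht : ScopedHowe 0 (Tm.lam t) t') (hv : IsValue v)
    (hs : ScopedHowe 0 v s) : HoweAnswers (Tm.app t' s) .tau (substT 0 v t) := by
  obtain ⟨b, rfl⟩ := hv
  obtain ⟨c, htc, hc⟩ := ht.exists_tauStar_lam
  obtain ⟨d, hsd, hd⟩ := hs.exists_tauStar_lam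
  exact ⟨_, .head (htc.app_left _) (.head (hsd.app_right ⟨_, rfl⟩) (.of_step (.beta ⟨_, rfl⟩))),
    hc.substT_of_lam hd ⟨_, rfl⟩⟩

theorem answers_tau (h : ScopedHowe 0 t s) (ht : Step t .tau t') : HoweAnswers s .tau t' := by
  induction t generalizing s t' with
  | var | lam | shift => cases ht
  | app a b iha ihb =>
    cases h with | app ha hb hs =>
    refine HoweAnswers.of_openBisim ?_ hs
    cases ht with
    | beta hv => exact ha.answers_beta hv hb
    | appL ht =>
      obtain ⟨a₁, ha₁, hta⟩ := iha ha ht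
      exact ⟨_, TauStar.app_left ha₁ _, hta.app_congr hb⟩
    | appR hv ht =>
      obtain ⟨_, rfl⟩ := hv
      obtain ⟨c, hac, hc⟩ := ha.exists_tauStar_lam
      obtain ⟨b₁, hb₁, htb⟩ := ihb hb ht
      exact ⟨_, .head (hac.app_left _) (TauStar.app_right ⟨_, rfl⟩ hb₁), hc.app_congr htb⟩
  | reset b ih =>
    cases h with | reset hb hs =>
    refine HoweAnswers.of_openBisim ?_ hs
    cases ht with
    | resetVal hv =>
      obtain ⟨_, rfl⟩ := hv
      obtain ⟨c, hbc, hc⟩ := hb.exists_tauStar_lam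
      exact ⟨_, .head hbc.reset (.of_step (.resetVal ⟨_, rfl⟩)), hc⟩
    | resetT ht =>
      obtain ⟨b₁, hb₁, htb⟩ := ih hb ht
      exact ⟨_, TauStar.reset hb₁, htb.reset_congr⟩
    | resetCap ht =>
      obtain ⟨u, ⟨b₁, hb₁, hu⟩, htu⟩ := hb.answers_ctx .hole ht
      exact ⟨u, .head hb₁.reset (.of_step (.resetCap hu)), htu⟩

theorem isSim : IsSim (ScopedHowe 0) := by
  intro t s h l t' ht
  cases l with
  | tau => exact h.answers_tau ht
  | val v => exact h.answers_val ht
  | ctx E => exact h.answers_ctx (.refl E) ht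

theorem transGen_of_swap (h : ScopedHowe n t s) : TransGen (ScopedHowe n) s t := by
  induction h with
  | var h => exact .single (of_openBisim h.symm)
  | lam _ h ih =>
    exact .head (of_openBisim h.symm) (ih.lift Tm.lam fun _ _ => lam_congr)
  | @app n a a' b b' s _ _ h iha ihb =>
    have ha := iha.lift (Tm.app · b') fun _ _ ha => ha.app_congr (refl n b')
    have hb := ihb.lift (Tm.app a ·) fun _ _ => (refl n a).app_congr
    exact .head (of_openBisim h.symm) (ha.trans hb)
  | shift _ h ih =>
    exact .head (of_openBisim h.symm) (ih.lift Tm.shift fun _ _ => shift_congr)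
  | reset _ h ih =>
    exact .head (of_openBisim h.symm) (ih.lift Tm.reset fun _ _ => reset_congr)

instance symm_transGen : Std.Symm (TransGen (ScopedHowe n)) where
  symm _ _ h := TransGen.closed (fun _ _ => transGen_of_swap) _ _ (TransGen.swap _ _ h)

theorem bisim (h : ScopedHowe 0 t s) : Bisim t s :=
  ⟨_, isSim.transGen.isBisim, .single h⟩

end ScopedHowe

/-! ### Closing with a diverging term -/

/-- Closes a term by replacing all its free variables with `Ω`. -/
def closeOmega (t : Tm) : Tm := applySub (fun _ => OmegaTm) t

theorem closed_closeOmega (t : Tm) : Closed (closeOmega t) :=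
  closedUnder_applySub (fun _ => by simp [OmegaTm, omegaTm, ClosedUnder]) t

theorem eq_of_step_OmegaTm {l : Label} {u : Tm} (h : Step OmegaTm l u) :
    l = .tau ∧ u = OmegaTm := by
  unfold OmegaTm omegaTm at h
  cases h with
  | beta => exact ⟨rfl, by simp [substT, liftT, OmegaTm, omegaTm]⟩
  | appL h | appR _ h | capL h | capR h => cases h

theorem bisim_var_OmegaTm (i : ℕ) : Bisim (var i) OmegaTm := by
  refine ⟨fun t s => t = var i ∧ s = OmegaTm, ⟨?_, ?_⟩, rfl, rfl⟩
  · rintro _ _ ⟨rfl, rfl⟩ l t' ht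
    cases ht
  · rintro _ _ ⟨rfl, rfl⟩ l s' hs
    obtain ⟨rfl, rfl⟩ := eq_of_step_OmegaTm hs
    exact ⟨var i, ReflTransGen.refl, rfl, rfl⟩

theorem bisim_closeOmega (t : Tm) : Bisim t (closeOmega t) := by
  have h := ScopedHowe.applySub_congr (fun i => .of_bisim (bisim_var_OmegaTm i)) t
  rw [applySub_var] at h
  exact h.bisim

theorem Bisim.applySub_of_openExt {t s : Tm} (h : OpenExt Bisim t s) (hσ : ∀ i, IsValue (σ i)) :
    Bisim (applySub σ t) (applySub σ s) := by
  have h_close (u : Tm) : Bisim (applySub σ u) (applySub (closeOmega ∘ σ) u) :=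
    (ScopedHowe.applySub_congr (fun i => .of_bisim (bisim_closeOmega (σ i))) u).bisim
  have h_closing : ClosingSub (closeOmega ∘ σ) :=
    fun i => ⟨(hσ i).applySub _, closed_closeOmega _⟩
  exact ((h_close t).trans (h _ h_closing)).trans (h_close s).symm

/-! ### Congruence -/

theorem ScopedHowe.applySub_of_openExt {t s : Tm} (h : OpenExt Bisim t s)
    (hσ : ∀ i, OpenValue n (σ i)) : ScopedHowe n (LamS.applySub σ t) (LamS.applySub σ s) := by
  refine of_openBisim fun ρ hρ => ?_
  simp only [applySub_applySub]
  exact .applySub_of_openExt h fun i =>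
    openValue_zero_iff.1 ((hσ i).applySub hρ.openValue)

theorem ScopedHowe.applySub_plug {t s : Tm}
    (h : ∀ {n : ℕ} {σ : ℕ → Tm}, (∀ i, OpenValue n (σ i)) →
      ScopedHowe n (LamS.applySub σ t) (LamS.applySub σ s))
    (C : Ctx) (hσ : ∀ i, OpenValue n (σ i)) :
    ScopedHowe n (LamS.applySub σ (C.plug t)) (LamS.applySub σ (C.plug s)) := by
  have h_lift {n : ℕ} {σ : ℕ → Tm} (hσ : ∀ i, OpenValue n (σ i)) (i : ℕ) :
      OpenValue (n + 1) (LamS.liftSub σ i) :=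
    OpenValue.liftSub (m := i) (fun j _ => hσ j) i i.lt_succ_self
  induction C generalizing n σ with
  | hole => exact h hσ
  | lam C ih => exact (ih (h_lift hσ)).lam_congr
  | appL C u ih => exact (ih hσ).app_congr (refl _ _)
  | appR u C ih => exact (refl _ _).app_congr (ih hσ)
  | shift C ih => exact (ih (h_lift hσ)).shift_congr
  | reset C ih => exact (ih hσ).reset_congr

end LamS

open LamS LamS.Tm in
/-- applicative bisimilarity is a congruence. -/
theorem bisim_congruence :
    ∀ t0 t1 : Tm, OpenExt Bisim t0 t1 →
      ∀ C : Ctx, OpenExt Bisim (C.plug t0) (C.plug t1) := by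
  intro t0 t1 h C σ hσ
  have h_values : ∀ i, OpenValue 0 (σ i) := fun i => .inl (hσ i).1
  exact (ScopedHowe.applySub_plug (ScopedHowe.applySub_of_openExt h) C h_values).bisim
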